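/- Let Φ be the root system of type B₃ realized with positive roots ε₁, ε₂, ε₃, ε_i + ε_j and ε_i − ε_j (i < j), and let P_k(ν) denote the number of ways to write ν as a sum of exactly k positive roots (with multiplicity, unordered). For every even integer m ≥ 0, the alternating sum over the Weyl group ∑_{u ∈ W} (−1)^{ℓ(u)} P_m(u·((m+1)ω₃) − ω₃) equals 1, where ω₃ = (ε₁+ε₂+ε₃)/2 and · is the dot action. -/

import Mathlib

noncomputable section

/-- the weight space of `B₃`, with coordinates in the `ε`-basis -/
abbrev V3 := Fin 3 → ℚ

/-- `ε_i` -/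
def e3 (i : Fin 3) : V3 := Pi.single i 1

/-- The nine positive roots of `B₃`: `ε₁, ε₂, ε₃` and `ε_i ± ε_j` for `i < j`. -/
def posB3 : Finset V3 :=
  {e3 0, e3 1, e3 2, e3 0 + e3 1, e3 0 + e3 2, e3 1 + e3 2,
   e3 0 - e3 1, e3 0 - e3 2, e3 1 - e3 2}

/-- Kostant's partition function: the number of ways (as unordered multisets) to write `ν`
as a sum of exactly `k` positive roots. -/
def PB3 (k : ℕ) (ν : V3) : ℕ :=
  Set.ncard {m : Multiset V3 | Multiset.card m = k ∧ (∀ x ∈ m, x ∈ posB3) ∧ m.sum = ν}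

/-- the standard inner product -/
def dot3 (x y : V3) : ℚ := ∑ i, x i * y i

/-- the reflection in the hyperplane orthogonal to `α` -/
def reflB3 (α : V3) : V3 → V3 := fun x => x - (2 * dot3 x α / dot3 α α) • α

/-- the simple roots `ε₁ - ε₂`, `ε₂ - ε₃`, `ε₃` of `B₃` -/
def simpleB3 : Fin 3 → V3 := fun i =>
  if i = 0 then e3 0 - e3 1 else if i = 1 then e3 1 - e3 2 else e3 2

/-- the composite of the simple reflections listed in `l` -/
def compB3 (l : List (Fin 3)) : V3 → V3 :=
  (l.map (fun i => reflB3 (simpleB3 i))).foldr (· ∘ ·) id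

/-- the length of a Weyl group element: the minimal length of a word in the simple
reflections representing it -/
def lenB3 (u : V3 → V3) : ℕ := sInf {m | ∃ l : List (Fin 3), l.length = m ∧ u = compB3 l}

/-- the half-sum `ρ` of the positive roots -/
def ρ3 : V3 := (2 : ℚ)⁻¹ • ∑ α ∈ posB3, α

/-- the fundamental weight `ω₃ = (ε₁ + ε₂ + ε₃)/2` -/
def ω3 : V3 := (2 : ℚ)⁻¹ • (e3 0 + e3 1 + e3 2)

open LaurentPolynomial Finset

/-- the sum of the `n` powers `T^(n-1), T^(n-3), …, T^(1-n)` -/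
def weightString (n : ℕ) : ℤ[T;T⁻¹] := ∑ i ∈ range n, T ((n : ℤ) - 1 - 2 * i)

/-- the character of the irreducible `SL₂`-representation of highest weight `k`, extended to all
integers by `chi (-k - 2) = -chi k` -/
def chi (k : ℤ) : ℤ[T;T⁻¹] :=
  if 0 ≤ k then weightString (k + 1).toNat else -weightString (-k - 1).toNat

lemma T_sub_mul_weightString (n : ℕ) :
    (T 1 - T (-1)) * weightString n = T (n : ℤ) - T (-(n : ℤ)) := by
  have h : ∀ m : ℕ, (T 1 - T (-1)) * ∑ i ∈ range m, T ((n : ℤ) - 1 - 2 * i)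
      = T (n : ℤ) - (T ((n : ℤ) - 2 * m) : ℤ[T;T⁻¹]) := by
    intro m
    induction m with
    | zero => simp
    | succ m ih =>
      rw [sum_range_succ, mul_add, ih, sub_mul, ← T_add, ← T_add]
      push_cast
      rw [show (1 : ℤ) + (n - 1 - 2 * m) = n - 2 * m by ring,
        show (-1 : ℤ) + (n - 1 - 2 * m) = n - 2 * (m + 1) by ring]
      ring
  rw [weightString, h n]
  congr 2
  ring

lemma T_sub_mul_chi (k : ℤ) : (T 1 - T (-1)) * chi k = T (k + 1) - T (-k - 1) := by
  unfold chi
  split_ifs with hk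
  · rw [T_sub_mul_weightString, Int.toNat_of_nonneg (by omega)]
    congr 2
    ring
  · rw [mul_neg, T_sub_mul_weightString, Int.toNat_of_nonneg (by omega), neg_sub]
    congr 2
    ring

lemma chi_neg_one : chi (-1) = 0 := by simp [chi, weightString]

lemma T_one_sub_ne_zero : (T 1 - T (-1) : ℤ[T;T⁻¹]) ≠ 0 := by
  intro h
  have := congrArg (fun f : ℤ[T;T⁻¹] => f.coeff 1) h
  simp at this

lemma chi_mul_sub_chi_mul (a b : ℤ) : chi a * chi b - chi (a + 1) * chi (b - 1) = chi (a - b) := by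
  apply mul_left_cancel₀ (mul_ne_zero T_one_sub_ne_zero T_one_sub_ne_zero)
  calc _ = ((T 1 - T (-1)) * chi a) * ((T 1 - T (-1)) * chi b)
        - ((T 1 - T (-1)) * chi (a + 1)) * ((T 1 - T (-1)) * chi (b - 1)) := by ring
    _ = (T 1 - T (-1)) * ((T 1 - T (-1)) * chi (a - b)) := by
      simp only [T_sub_mul_chi]
      simp only [mul_sub, sub_mul, ← T_add]
      ring_nf
    _ = _ := by ring

lemma coeff_chi_eq_zero {k w : ℤ} (h₁ : -|w| - 2 < k) (h₂ : k < |w|) : (chi k).coeff w = 0 := by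
  have h : ∀ n : ℕ, (n : ℤ) ≤ |w| → (weightString n).coeff w = 0 := by
    intro n hn
    simp only [weightString, AddMonoidAlgebra.coeff_sum, Finsupp.finsetSum_apply, T_apply]
    refine sum_eq_zero fun i hi => if_neg ?_
    rw [mem_range] at hi
    rcases abs_cases w with hw | hw <;> omega
  unfold chi
  split_ifs with hk
  · exact h _ (by omega)
  · rw [AddMonoidAlgebra.coeff_neg, Finsupp.neg_apply, h _ (by omega), neg_zero]

lemma coeff_chi_self {k : ℤ} (hk : 0 ≤ k) : (chi k).coeff k = 1 := by
  obtain ⟨n, rfl⟩ := Int.eq_ofNat_of_zero_le hk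
  simp only [chi, hk, if_true, weightString, AddMonoidAlgebra.coeff_sum, Finsupp.finsetSum_apply,
    T_apply]
  rw [sum_eq_single 0]
  · rw [if_pos]; omega
  · intro i hi h0
    rw [if_neg]; omega
  · intro h; exact absurd (mem_range.2 (by omega)) h

/-- For `x < N`, the character of the `x`-th symmetric power of the representation with weights
`0, 1, -1`. -/
def symChar (N : ℕ) (x : ℤ) : ℤ[T;T⁻¹] :=
  ∑ s ∈ range N, ∑ d ∈ range N, if (s : ℤ) + d ≤ x then T ((s : ℤ) - d) else 0

/-- For `m < 2 * N`, the sum of `symChar N m`, `symChar N (m - 2)`, `symChar N (m - 4)`, …. -/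
def symCharSum (N : ℕ) (m : ℤ) : ℤ[T;T⁻¹] := ∑ p ∈ range N, symChar N (m - 2 * p)

lemma symChar_of_neg (N : ℕ) {x : ℤ} (hx : x < 0) : symChar N x = 0 :=
  sum_eq_zero fun s _ => sum_eq_zero fun d _ => if_neg (by omega)

lemma symCharSum_of_neg (N : ℕ) {m : ℤ} (hm : m < 0) : symCharSum N m = 0 :=
  sum_eq_zero fun p _ => symChar_of_neg N (by omega)

lemma symChar_eq_add_chi {N : ℕ} {x : ℤ} (hx : 0 ≤ x) (hN : x < N) :
    symChar N x = symChar N (x - 1) + chi x := by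
  obtain ⟨n, rfl⟩ := Int.eq_ofNat_of_zero_le hx
  rw [← sub_eq_iff_eq_add', symChar, symChar, ← sum_sub_distrib, sum_congr rfl
    fun s _ => (sum_sub_distrib _ _).symm, sum_comm, chi, if_pos hx, weightString]
  have hs : range (((n : ℕ) : ℤ) + 1).toNat ⊆ range N := by
    intro i; simp only [mem_range]; omega
  refine (sum_subset_zero_on_sdiff hs (fun d hd => ?_) fun d hd => ?_).symm
  · simp only [mem_sdiff, mem_range] at hd
    exact sum_eq_zero fun s _ => by rw [if_neg (by omega), if_neg (by omega), sub_zero]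
  · simp only [mem_range] at hd
    rw [sum_eq_single (n - d)]
    · rw [if_pos (by omega), if_neg (by omega), sub_zero]
      congr 1; omega
    · intro s _ h
      by_cases h1 : (s : ℤ) + d ≤ (n : ℕ)
      · rw [if_pos h1, if_pos (by omega), sub_self]
      · rw [if_neg h1, if_neg (by omega), sub_self]
    · intro h; exact absurd (mem_range.2 (by omega)) h

lemma symCharSum_eq_add {N : ℕ} {m : ℤ} (hN : m < 2 * N) :
    symCharSum N m = symCharSum N (m - 2) + symChar N m := by
  have h := sum_range_succ (fun p : ℕ => symChar N (m - 2 * p)) N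
  rw [sum_range_succ', symChar_of_neg N (by omega : m - 2 * (N : ℤ) < 0), add_zero] at h
  rw [symCharSum, symCharSum, ← h]
  simp only [Nat.cast_zero, mul_zero, sub_zero]
  congr 1
  refine sum_congr rfl fun p _ => ?_
  congr 1
  push_cast
  ring

lemma symChar_mul_chi_sub {N X : ℕ} (hX : X < N) (m : ℤ) :
    symChar N ((X : ℤ) - 1) * chi m - symChar N X * chi (m - 1)
      = ∑ a ∈ range (X + 1), chi ((a : ℤ) - 1 - m) := by
  induction X with
  | zero =>
    rw [symChar_eq_add_chi (x := ((0 : ℕ) : ℤ)) (by simp) (by exact_mod_cast hX),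
      symChar_of_neg N (by simp)]
    have h := chi_mul_sub_chi_mul (-1) m
    rw [chi_neg_one] at h
    simpa using h
  | succ X ih =>
    rw [sum_range_succ, ← ih (by omega),
      symChar_eq_add_chi (x := ((X + 1 : ℕ) : ℤ)) (by omega) (by omega)]
    have h := chi_mul_sub_chi_mul X m
    push_cast
    rw [add_sub_cancel_right, ← h, symChar_eq_add_chi (x := (X : ℤ)) (by omega) (by omega)]
    ring

lemma coeff_symChar_mul_symChar_sub_succ {N X m : ℕ} (hX : X < N) (hm : m < N) (w : ℤ) :
    (symChar N ((X : ℤ) - 1) * symChar N m - symChar N X * symChar N ((m : ℤ) - 1)).coeff w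
      = (symChar N ((X : ℤ) - 1) * symChar N ((m : ℤ) - 1)
          - symChar N X * symChar N ((m : ℤ) - 1 - 1)).coeff w
        + ∑ a ∈ range (X + 1), (chi ((a : ℤ) - 1 - m)).coeff w := by
  have h : symChar N ((X : ℤ) - 1) * symChar N m - symChar N X * symChar N ((m : ℤ) - 1)
      = (symChar N ((X : ℤ) - 1) * symChar N ((m : ℤ) - 1)
          - symChar N X * symChar N ((m : ℤ) - 1 - 1))
        + (symChar N ((X : ℤ) - 1) * chi m - symChar N X * chi ((m : ℤ) - 1)) := by
    rw [symChar_eq_add_chi (x := (m : ℤ)) (by omega) (by omega)]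
    rcases Nat.eq_zero_or_pos m with rfl | h0
    · simp [chi_neg_one, symChar_of_neg]
    · rw [symChar_eq_add_chi (x := (m : ℤ) - 1) (by omega) (by omega)]
      ring
  rw [h, AddMonoidAlgebra.coeff_add, Finsupp.add_apply, symChar_mul_chi_sub hX]
  simp [AddMonoidAlgebra.coeff_sum, Finsupp.finsetSum_apply]

lemma coeff_symChar_mul_symChar_sub_eq_zero {N X M : ℕ} {w : ℤ} (hX : X < N) (hM : M ≤ N)
    (hXw : (X : ℤ) - 1 < |w|) (hMw : (M : ℤ) - 1 ≤ |w|) :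
    (symChar N ((X : ℤ) - 1) * symChar N ((M : ℤ) - 1)
      - symChar N X * symChar N ((M : ℤ) - 1 - 1)).coeff w = 0 := by
  induction M with
  | zero => simp [symChar_of_neg]
  | succ m ih =>
    push_cast at hMw ⊢
    rw [add_sub_cancel_right, coeff_symChar_mul_symChar_sub_succ hX (by omega),
      ih (by omega) (by omega), zero_add]
    exact sum_eq_zero fun a ha => by
      rw [mem_range] at ha
      exact coeff_chi_eq_zero (by omega) (by omega)

lemma coeff_symChar_mul_symChar_sub_self {N x m : ℕ} (hx : x + 1 < N) (hm : m ≤ x) :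
    (symChar N x * symChar N m - symChar N (x + 1) * symChar N ((m : ℤ) - 1)).coeff (x : ℤ) = 1 := by
  have hx' : |(x : ℤ)| = x := abs_of_nonneg (by omega)
  induction m with
  | zero =>
    have h := coeff_symChar_mul_symChar_sub_succ (X := x + 1) (m := 0) hx (by omega) x
    push_cast at h
    rw [add_sub_cancel_right] at h
    push_cast
    rw [h, sum_range_succ, sum_eq_zero]
    · simp [symChar_of_neg, coeff_chi_self]
    · intro a ha
      rw [mem_range] at ha
      exact coeff_chi_eq_zero (by omega) (by omega)
  | succ m ih =>
    have h := coeff_symChar_mul_symChar_sub_succ (X := x + 1) (m := m + 1) hx (by omega) x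
    push_cast at h
    rw [add_sub_cancel_right, add_sub_cancel_right] at h
    push_cast
    rw [add_sub_cancel_right, h, ih (by omega), sum_eq_zero, add_zero]
    intro a ha
    rw [mem_range] at ha
    exact coeff_chi_eq_zero (by omega) (by omega)

/-- the alternating product of `symChar` and `symCharSum` -/
def altChar (N : ℕ) (x m : ℤ) : ℤ[T;T⁻¹] :=
  symChar N x * symCharSum N m - symChar N (x + 1) * symCharSum N (m - 1)

lemma altChar_eq_add {N : ℕ} {x m : ℤ} (hm : m < N) :
    altChar N x m = altChar N x (m - 2)
      + (symChar N x * symChar N m - symChar N (x + 1) * symChar N (m - 1)) := by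
  rw [altChar, altChar, symCharSum_eq_add (m := m) (by omega),
    symCharSum_eq_add (m := m - 1) (by omega), show m - 1 - 2 = m - 2 - 1 by ring]
  ring

lemma altChar_of_neg (N : ℕ) (x : ℤ) {m : ℤ} (hm : m < 0) : altChar N x m = 0 := by
  rw [altChar, symCharSum_of_neg N hm, symCharSum_of_neg N (by omega), mul_zero, mul_zero, sub_zero]

lemma coeff_altChar_eq_zero {N : ℕ} {x w m : ℤ} (hx : -1 ≤ x) (hxN : x + 1 < N) (hxw : x < |w|)
    (hm : m < N) (hmw : m ≤ |w|) : (altChar N x m).coeff w = 0 := by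
  rcases lt_or_ge m 0 with h | h
  · simp [altChar_of_neg N x h]
  · rw [altChar_eq_add hm, AddMonoidAlgebra.coeff_add, Finsupp.add_apply,
      coeff_altChar_eq_zero hx hxN hxw (by omega) (by omega), zero_add]
    have h2 := coeff_symChar_mul_symChar_sub_eq_zero (N := N) (X := (x + 1).toNat)
      (M := (m + 1).toNat) (w := w) (by omega) (by omega) (by omega) (by omega)
    rwa [Int.toNat_of_nonneg (by omega), Int.toNat_of_nonneg (by omega), add_sub_cancel_right,
      add_sub_cancel_right] at h2
termination_by (m + 2).toNat

lemma coeff_altChar_self {N : ℕ} {x m : ℤ} (hxN : x + 1 < N) (hm : -2 ≤ m) (hmx : m ≤ x) :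
    (altChar N x m).coeff x = (m + 2) / 2 := by
  rcases lt_or_ge m 0 with h | h
  · simp only [altChar_of_neg N x h, AddMonoidAlgebra.coeff_zero, Finsupp.coe_zero, Pi.zero_apply]
    omega
  · rw [altChar_eq_add (by omega), AddMonoidAlgebra.coeff_add, Finsupp.add_apply,
      coeff_altChar_self hxN (by omega) (by omega)]
    have h2 := coeff_symChar_mul_symChar_sub_self (N := N) (x := x.toNat) (m := m.toNat)
      (by omega) (by omega)
    rw [Int.toNat_of_nonneg (by omega), Int.toNat_of_nonneg (by omega)] at h2
    rw [h2]
    omega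
termination_by (m + 2).toNat

/-- a closed expression for the number of ways to write `(a, b, c)` as a sum of `k` positive roots,
valid for large `N` -/
def partitionCoeff (N k : ℕ) (a b c : ℤ) : ℤ :=
  ∑ g ∈ Icc (-N : ℤ) N, if a + b - k ≤ g then
    (symChar N (b - g) * symCharSum N (a - |g|)).coeff (a + b + c - k - g) else 0

lemma partitionCoeff_sub_partitionCoeff (N k : ℕ) (a b c : ℤ) :
    partitionCoeff N k (a + 1) b c - partitionCoeff N k a (b + 1) c
      = ∑ g ∈ Icc (-N : ℤ) N, if a + 1 + b - k ≤ g then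
          (altChar N (b - g) (a + 1 - |g|)).coeff (a + 1 + b + c - k - g) else 0 := by
  rw [partitionCoeff, partitionCoeff, ← sum_sub_distrib]
  refine sum_congr rfl fun g _ => ?_
  rw [show a + (b + 1) = a + 1 + b by ring]
  split_ifs with h
  · rw [altChar, AddMonoidAlgebra.coeff_sub, Finsupp.sub_apply,
      show b + 1 - g = b - g + 1 by ring, show a + 1 - |g| - 1 = a - |g| by ring]
  · simp

lemma sum_half_sub_half (n : ℕ) :
    ∑ i ∈ range (n + 1), (((i : ℤ) + 2) / 2 - ((i : ℤ) + 1) / 2) = ((n : ℤ) + 2) / 2 := by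
  have h := sum_range_sub (fun i : ℕ => ((i : ℤ) + 1) / 2) (n + 1)
  push_cast at h
  simp only [add_assoc, one_add_one_eq_two] at h ⊢
  rw [h]
  norm_num

lemma sum_Icc_half_sub_half {n N : ℕ} (hN : n < N) :
    ∑ g ∈ Icc (-N : ℤ) N, ((if g = -1 then -((n : ℤ) / 2) else 0)
      + if 0 ≤ g ∧ g ≤ n then ((n - g + 2) / 2 - (n - g + 1) / 2) else 0) = 1 := by
  rw [sum_add_distrib, sum_ite_eq', if_pos (by rw [mem_Icc]; omega), ← sum_filter,
    ← sum_nbij' (s := range (n + 1)) (f := fun i => ((i : ℤ) + 2) / 2 - ((i : ℤ) + 1) / 2)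
      (fun i : ℕ => (n : ℤ) - i) (fun g => ((n : ℤ) - g).toNat), sum_half_sub_half]
  · omega
  · intro i hi; simp only [mem_range, mem_filter, mem_Icc] at *; omega
  · intro g hg; simp only [mem_range, mem_filter, mem_Icc] at *; omega
  · intro i hi; simp only [mem_range] at *; omega
  · intro g hg; simp only [mem_filter, mem_Icc] at *; omega
  · intro i hi; simp

/-- the contribution to the alternating sum of the two signed permutations sending `λ + ρ` to
`(x, y, ±z)` -/
def partitionCoeffDiff (N k : ℕ) (x y z : ℤ) : ℤ :=
  partitionCoeff N k (x - 3) (y - 2) (z - 1) - partitionCoeff N k (x - 3) (y - 2) (-z - 1)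

lemma altChar_contribution {n N : ℕ} (hN : 4 * n + 10 ≤ N) (g : ℤ) :
    ((if 0 ≤ g then (altChar N (n - g) (n - |g|)).coeff (n - g) else 0)
      - (if 0 ≤ g then (altChar N (n - g) (n - |g|)).coeff (-n - 2 - g) else 0)
      - (if -1 ≤ g then (altChar N (n - 1 - g) (n - |g|)).coeff (n - g) else 0)
      + (if -1 ≤ g then (altChar N (n - 1 - g) (n - |g|)).coeff (-n - 4 - g) else 0)
      - (if -1 ≤ g then (altChar N (n - g) (n - 1 - |g|)).coeff (n - g) else 0)
      + (if -1 ≤ g then (altChar N (n - g) (n - 1 - |g|)).coeff (-n - 4 - g) else 0)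
      + (if -2 ≤ g then (altChar N (n - 1 - g) (n - 1 - |g|)).coeff (n - g) else 0)
      - (if -2 ≤ g then (altChar N (n - 1 - g) (n - 1 - |g|)).coeff (-n - 6 - g) else 0) : ℤ)
    = (if g = -1 then -((n : ℤ) / 2) else 0)
      + if 0 ≤ g ∧ g ≤ n then ((n - g + 2) / 2 - (n - g + 1) / 2) else 0 := by
  have hz : ∀ x m w : ℤ, (m < 0 ∨ (-1 ≤ x ∧ x + 1 < N ∧ x < |w| ∧ m < N ∧ m ≤ |w|)) →
      (altChar N x m).coeff w = 0 := by
    rintro x m w (h | ⟨h1, h2, h3, h4, h5⟩)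
    · simp [altChar_of_neg N x h]
    · exact coeff_altChar_eq_zero h1 h2 h3 h4 h5
  rcases lt_or_ge g (-2) with h | h
  · rw [if_neg (by omega), if_neg (by omega), if_neg (by omega), if_neg (by omega),
      if_neg (by omega), if_neg (by omega), if_neg (by omega), if_neg (by omega),
      if_neg (by omega), if_neg (by omega)]
    ring
  rw [if_pos h, if_pos h, hz (n - 1 - g) (n - 1 - |g|) (n - g) (by grind),
    hz (n - 1 - g) (n - 1 - |g|) (-n - 6 - g) (by grind)]
  rcases eq_or_lt_of_le h with rfl | h
  · norm_num
  have h : -1 ≤ g := h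
  rw [if_pos h, if_pos h, if_pos h, if_pos h, hz (n - 1 - g) (n - |g|) (n - g) (by grind),
    hz (n - 1 - g) (n - |g|) (-n - 4 - g) (by grind),
    hz (n - g) (n - 1 - |g|) (-n - 4 - g) (by grind)]
  rcases eq_or_lt_of_le h with rfl | h
  · rw [coeff_altChar_self (x := (n : ℤ) - -1) (m := n - 1 - |-1|) (by omega) (by grind) (by grind)]
    norm_num
    ring_nf
  have h : 0 ≤ g := h
  rw [if_pos h, if_pos h, hz (n - g) (n - |g|) (-n - 2 - g) (by grind), abs_of_nonneg h,
    if_neg (by omega)]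
  by_cases hg : g ≤ n
  · rw [coeff_altChar_self (by omega) (by omega) le_rfl,
      coeff_altChar_self (by omega) (by omega) (by omega), if_pos ⟨h, hg⟩]
    ring_nf
  · rw [hz _ _ _ (by omega), hz _ _ _ (by omega), if_neg (by omega)]
    ring

lemma alternating_partitionCoeffDiff {n N : ℕ} (hN : 4 * n + 10 ≤ N) :
    partitionCoeffDiff N (2 * n) (n + 3) (n + 2) (n + 1)
      - partitionCoeffDiff N (2 * n) (n + 2) (n + 3) (n + 1)
      - partitionCoeffDiff N (2 * n) (n + 3) (n + 1) (n + 2)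
      + partitionCoeffDiff N (2 * n) (n + 1) (n + 3) (n + 2)
      + partitionCoeffDiff N (2 * n) (n + 2) (n + 1) (n + 3)
      - partitionCoeffDiff N (2 * n) (n + 1) (n + 2) (n + 3) = 1 := by
  have h := fun a b c : ℤ => partitionCoeff_sub_partitionCoeff N (2 * n) a b c
  refine Eq.trans ?_ (sum_Icc_half_sub_half (n := n) (N := N) (by omega))
  rw [← sum_congr rfl fun g _ => altChar_contribution hN g]
  simp only [sum_add_distrib, sum_sub_distrib]
  have h1 := h (n - 1) n n
  have h2 := h (n - 1) n (-n - 2)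
  have h3 := h (n - 1) (n - 1) (n + 1)
  have h4 := h (n - 1) (n - 1) (-n - 3)
  have h5 := h (n - 2) n (n + 1)
  have h6 := h (n - 2) n (-n - 3)
  have h7 := h (n - 2) (n - 1) (n + 2)
  have h8 := h (n - 2) (n - 1) (-n - 4)
  simp only [partitionCoeffDiff]
  push_cast at h1 h2 h3 h4 h5 h6 h7 h8
  ring_nf at h1 h2 h3 h4 h5 h6 h7 h8 ⊢
  linarith

/-- the positive roots of `B₃` as integer vectors, in the order used to define `posB3` -/
def intRoot : Fin 9 → Fin 3 → ℤ :=
  ![![1, 0, 0], ![0, 1, 0], ![0, 0, 1], ![1, 1, 0], ![1, 0, 1], ![0, 1, 1],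
    ![1, -1, 0], ![1, 0, -1], ![0, 1, -1]]

/-- an integer vector as an element of the weight space -/
def ofInt (z : Fin 3 → ℤ) : V3 := fun i => (z i : ℚ)

lemma ofInt_injective : Function.Injective ofInt := fun x y h => by
  ext i
  exact Int.cast_injective (congrFun h i)

lemma intRoot_injective : Function.Injective intRoot := by decide

lemma posB3_eq_image : posB3 = univ.image fun i => ofInt (intRoot i) := by
  have h : ∀ i, ofInt (intRoot i) = (![e3 0, e3 1, e3 2, e3 0 + e3 1, e3 0 + e3 2, e3 1 + e3 2,
      e3 0 - e3 1, e3 0 - e3 2, e3 1 - e3 2] : Fin 9 → V3) i := by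
    intro i
    ext j
    fin_cases i <;> fin_cases j <;> simp [ofInt, intRoot, e3]
  simp only [h]
  ext x
  simp [posB3, Fin.exists_fin_succ, eq_comm]

lemma ncard_multiset_sum_eq {ι V : Type*} [Fintype ι] [AddCommMonoid V] {r : ι → V}
    (hr : Function.Injective r) (k : ℕ) (v : V) :
    Set.ncard {m : Multiset V | Multiset.card m = k ∧ (∀ x ∈ m, x ∈ Set.range r) ∧ m.sum = v}
      = Set.ncard {t : ι → ℕ | ∑ i, t i = k ∧ ∑ i, t i • r i = v} := by
  classical
  let M : (ι → ℕ) → Multiset V := fun t => ∑ i, t i • {r i}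
  have hcount : ∀ t i, (M t).count (r i) = t i := by
    intro t i
    simp [M, Multiset.count_sum', Multiset.count_nsmul, Multiset.count_singleton, hr.eq_iff]
  have hM : Function.Injective M := fun t t' h => by
    ext i
    rw [← hcount t, h, hcount]
  have hcard : ∀ t, Multiset.card (M t) = ∑ i, t i := by simp [M]
  have hsum : ∀ t, (M t).sum = ∑ i, t i • r i := by
    intro t
    simp only [M, ← Multiset.coe_sumAddMonoidHom, map_sum, map_nsmul]
    simp
  rw [← Set.ncard_image_of_injective _ hM]
  congr 1
  ext m
  simp only [Set.mem_ofPred_eq, Set.mem_image]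
  constructor
  · rintro ⟨h1, h2, h3⟩
    have hm : M (fun i => m.count (r i)) = m := by
      ext x
      by_cases hx : x ∈ Set.range r
      · obtain ⟨i, rfl⟩ := hx
        rw [hcount]
      · rw [Multiset.count_eq_zero_of_notMem fun h => hx (h2 x h),
          Multiset.count_eq_zero_of_notMem]
        simp only [M, Multiset.mem_sum, not_exists, not_and]
        intro i _ h
        exact hx ⟨i, (Multiset.mem_singleton.1 (Multiset.mem_of_mem_nsmul h)).symm⟩
    exact ⟨_, ⟨by rw [← hcard, hm, h1], by rw [← hsum, hm, h3]⟩, hm⟩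
  · rintro ⟨t, ⟨h1, h2⟩, rfl⟩
    refine ⟨by rw [hcard, h1], fun x hx => ?_, by rw [hsum, h2]⟩
    simp only [M, Multiset.mem_sum] at hx
    obtain ⟨i, _, h⟩ := hx
    exact ⟨i, (Multiset.mem_singleton.1 (Multiset.mem_of_mem_nsmul h)).symm⟩

lemma PB3_ofInt (k : ℕ) (a b c : ℤ) :
    PB3 k (ofInt ![a, b, c]) = Set.ncard {t : Fin 9 → ℕ |
      t 0 + t 1 + t 2 + t 3 + t 4 + t 5 + t 6 + t 7 + t 8 = k ∧
      (t 0 + t 3 + t 4 + t 6 + t 7 : ℤ) = a ∧ (t 1 + t 3 + t 5 - t 6 + t 8 : ℤ) = b ∧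
      (t 2 + t 4 + t 5 - t 7 - t 8 : ℤ) = c} := by
  have h := ncard_multiset_sum_eq (ofInt_injective.comp intRoot_injective) k (ofInt ![a, b, c])
  rw [PB3, posB3_eq_image]
  simp only [mem_image, mem_univ, true_and]
  refine Eq.trans h (congrArg _ (Set.ext fun t => ?_))
  have hs : ∑ i, t i • (ofInt ∘ intRoot) i = ofInt (∑ i, t i • intRoot i) := by
    ext j
    simp [ofInt]
  rw [Set.mem_ofPred_eq, Set.mem_ofPred_eq, hs, ofInt_injective.eq_iff, funext_iff]
  simp only [Fin.sum_univ_succ, Fin.forall_fin_succ, intRoot]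
  simp
  omega

/-- the box of parameters `(g, s, d, p, s', d')` for the solutions counted by `PB3` -/
def paramBox (N : ℕ) : Finset (ℤ × ℕ × ℕ × ℕ × ℕ × ℕ) :=
  Icc (-N : ℤ) N ×ˢ range N ×ˢ range N ×ˢ range N ×ˢ range N ×ˢ range N

/-- the condition for parameters to define a solution -/
def IsParam (k : ℕ) (a b c : ℤ) (q : ℤ × ℕ × ℕ × ℕ × ℕ × ℕ) : Prop :=
  a + b - k ≤ q.1 ∧ (q.2.1 + q.2.2.1 : ℤ) ≤ b - q.1 ∧
    (q.2.2.2.2.1 + q.2.2.2.2.2 : ℤ) ≤ a - |q.1| - 2 * q.2.2.2.1 ∧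
    (q.2.1 - q.2.2.1 + (q.2.2.2.2.1 - q.2.2.2.2.2) : ℤ) = a + b + c - k - q.1

open Classical in
lemma partitionCoeff_eq_card (N k : ℕ) (a b c : ℤ) :
    partitionCoeff N k a b c = ((paramBox N).filter (IsParam k a b c)).card := by
  rw [card_filter, paramBox]
  push_cast
  simp only [sum_product, partitionCoeff]
  refine sum_congr rfl fun g _ => ?_
  split_ifs with hg
  · simp only [symChar, symCharSum, sum_mul, AddMonoidAlgebra.coeff_sum, Finsupp.finsetSum_apply]
    refine sum_congr rfl fun s _ => sum_congr rfl fun d _ => ?_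
    simp only [mul_sum, AddMonoidAlgebra.coeff_sum, Finsupp.finsetSum_apply]
    refine sum_congr rfl fun p _ => sum_congr rfl fun s' _ => sum_congr rfl fun d' _ => ?_
    simp only [ite_mul, mul_ite, zero_mul, mul_zero, ← T_add, IsParam, hg, true_and, ite_and]
    split_ifs <;> simp_all
  · simp [IsParam, hg]

lemma PB3_eq_partitionCoeff {N k : ℕ} {a b c : ℤ} (ha : a < N) (hab : a + b < N) :
    (PB3 k (ofInt ![a, b, c]) : ℤ) = partitionCoeff N k a b c := by
  classical
  rw [PB3_ofInt, partitionCoeff_eq_card, ← Set.ncard_coe_finset]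
  congr 1
  refine Set.ncard_congr (fun t _ => ((t 3 : ℤ) - t 6, t 5, t 8, min (t 3) (t 6), t 4, t 7)) ?_ ?_ ?_
  · rintro t ⟨h1, h2, h3, h4⟩
    simp only [coe_filter, Set.mem_ofPred_eq, paramBox, mem_product, mem_Icc, mem_range, IsParam]
    rcases abs_cases ((t 3 : ℤ) - t 6) with hg | hg
    all_goals omega
  · rintro t t' ⟨h1, h2, h3, h4⟩ ⟨h1', h2', h3', h4'⟩ h
    simp only [Prod.mk.injEq] at h
    ext i
    fin_cases i <;> simp <;> omega
  · rintro ⟨g, s, d, p, s', d'⟩ h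
    simp only [coe_filter, Set.mem_ofPred_eq, paramBox, mem_product, mem_Icc, mem_range,
      IsParam] at h
    obtain ⟨_, h1, h2, h3, h4⟩ := h
    refine ⟨![(a - |g| - 2 * p - s' - d').toNat, (b - g - s - d).toNat, (k - a - b + g).toNat,
      p + g.toNat, s', s, p + (-g).toNat, d', d], ⟨?_, ?_, ?_, ?_⟩, ?_⟩
    all_goals simp
    all_goals rcases abs_cases g with hg | hg
    all_goals omega

/-- the signed permutation of the coordinates given by `σ` and the signs `s` -/
def signedPerm (σ : Equiv.Perm (Fin 3)) (s : Fin 3 → ℤˣ) : V3 → V3 :=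
  fun x i => ((s i : ℤ) : ℚ) * x (σ i)

lemma signedPerm_comp (σ τ : Equiv.Perm (Fin 3)) (s t : Fin 3 → ℤˣ) :
    signedPerm σ s ∘ signedPerm τ t = signedPerm (τ * σ) fun i => s i * t (σ i) := by
  ext x i
  simp [signedPerm, mul_assoc]

lemma signedPerm_one : signedPerm 1 1 = id := by
  ext x i
  simp [signedPerm]

lemma signedPerm_injective :
    Function.Injective fun p : Equiv.Perm (Fin 3) × (Fin 3 → ℤˣ) => signedPerm p.1 p.2 := by
  rintro ⟨σ, s⟩ ⟨τ, t⟩ h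
  have h1 : ∀ i, (s i : ℤ) * ((σ i : ℕ) + 1 : ℤ) = t i * ((τ i : ℕ) + 1 : ℤ) := by
    intro i
    have := congrFun (congrFun h fun j => (j : ℕ) + 1) i
    simp only [signedPerm] at this
    exact_mod_cast this
  have h2 : ∀ i, σ i = τ i ∧ s i = t i := by
    intro i
    have := h1 i
    rw [Fin.ext_iff]
    rcases Int.units_eq_one_or (s i) with hs | hs <;> rcases Int.units_eq_one_or (t i) with ht | ht
    all_goals
      rw [hs, ht] at this ⊢
      push_cast at this
      first
        | exact ⟨by omega, rfl⟩
        | omega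
  exact Prod.ext (Equiv.ext fun i => (h2 i).1) (funext fun i => (h2 i).2)

lemma reflB3_simpleB3 (i : Fin 3) : reflB3 (simpleB3 i) =
    ![signedPerm (Equiv.swap 0 1) 1, signedPerm (Equiv.swap 1 2) 1,
      signedPerm 1 (Function.update 1 2 (-1))] i := by
  ext x j
  fin_cases i <;> fin_cases j <;>
    simp [reflB3, simpleB3, dot3, e3, signedPerm, Fin.sum_univ_three, Equiv.swap_apply_of_ne_of_ne,
      Function.update] <;> ring

lemma compB3_append (l l' : List (Fin 3)) : compB3 (l ++ l') = compB3 l ∘ compB3 l' := by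
  induction l with
  | nil => rfl
  | cons i l ih =>
    have h : ∀ l, compB3 (i :: l) = reflB3 (simpleB3 i) ∘ compB3 l := fun _ => rfl
    rw [List.cons_append, h, h, ih, Function.comp_assoc]

lemma compB3_singleton (i : Fin 3) : compB3 [i] = reflB3 (simpleB3 i) := rfl

/-- the determinant of a signed permutation -/
def signedPermSign (σ : Equiv.Perm (Fin 3)) (s : Fin 3 → ℤˣ) : ℤˣ := σ.sign * ∏ i, s i

lemma exists_signedPerm_eq_compB3 (l : List (Fin 3)) :
    ∃ σ s, compB3 l = signedPerm σ s ∧ (-1) ^ l.length = signedPermSign σ s := by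
  induction l with
  | nil => exact ⟨1, 1, signedPerm_one.symm, by simp [signedPermSign]⟩
  | cons i l ih =>
    obtain ⟨τ, t, h, h'⟩ := ih
    have hi : ∃ σ s, reflB3 (simpleB3 i) = signedPerm σ s ∧ -1 = signedPermSign σ s := by
      rw [reflB3_simpleB3]
      fin_cases i
      · exact ⟨_, _, rfl, by decide⟩
      · exact ⟨_, _, rfl, by decide⟩
      · exact ⟨_, _, rfl, by decide⟩
    obtain ⟨σ, s, h1, h2⟩ := hi
    refine ⟨τ * σ, fun i => s i * t (σ i), ?_, ?_⟩
    · rw [← signedPerm_comp, ← h, ← h1]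
      rfl
    · rw [List.length_cons, pow_succ, h', h2, signedPermSign, signedPermSign, signedPermSign,
        Equiv.Perm.sign_mul, prod_mul_distrib, Equiv.prod_comp σ t, mul_mul_mul_comm,
        mul_comm (∏ i, t i)]

lemma exists_compB3_eq_signedPerm (σ : Equiv.Perm (Fin 3)) (s : Fin 3 → ℤˣ) :
    ∃ l, signedPerm σ s = compB3 l := by
  have hcomp : ∀ {u v : V3 → V3}, (∃ l, u = compB3 l) → (∃ l, v = compB3 l) →
      ∃ l, u ∘ v = compB3 l := by
    rintro u v ⟨l, rfl⟩ ⟨l', rfl⟩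
    exact ⟨l ++ l', (compB3_append l l').symm⟩
  have hmul : ∀ {τ τ' : Equiv.Perm (Fin 3)}, (∃ l, signedPerm τ 1 = compB3 l) →
      (∃ l, signedPerm τ' 1 = compB3 l) → ∃ l, signedPerm (τ * τ') 1 = compB3 l := by
    intro τ τ' h h'
    convert hcomp h' h using 3
    rw [signedPerm_comp]
    simp
    rfl
  have h01 : ∃ l, signedPerm (Equiv.swap 0 1) 1 = compB3 l :=
    ⟨[0], by rw [compB3_singleton, reflB3_simpleB3]; rfl⟩
  have h12 : ∃ l, signedPerm (Equiv.swap 1 2) 1 = compB3 l :=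
    ⟨[1], by rw [compB3_singleton, reflB3_simpleB3]; rfl⟩
  have hid : ∃ l, signedPerm 1 1 = compB3 l := ⟨[], signedPerm_one⟩
  have h02 : ∃ l, signedPerm (Equiv.swap 0 2) 1 = compB3 l := by
    rw [show Equiv.swap (0 : Fin 3) 2 = Equiv.swap 0 1 * Equiv.swap 1 2 * Equiv.swap 0 1 by decide]
    exact hmul (hmul h01 h12) h01
  have hswap : ∀ i j : Fin 3, i ≠ j → ∃ l, signedPerm (Equiv.swap i j) 1 = compB3 l := by
    intro i j hij
    fin_cases i <;> fin_cases j
    all_goals first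
      | exact absurd rfl hij
      | exact h01
      | exact h12
      | exact h02
      | (rw [Equiv.swap_comm]; first | exact h01 | exact h12 | exact h02)
  have hperm : ∃ l, signedPerm σ 1 = compB3 l :=
    Equiv.Perm.swap_induction_on σ hid fun f i j hij hf => hmul (hswap i j hij) hf
  have hflip2 : ∃ l, signedPerm 1 (Function.update 1 2 (-1)) = compB3 l :=
    ⟨[2], by rw [compB3_singleton, reflB3_simpleB3]; rfl⟩
  have hflip : ∀ i : Fin 3, ∃ l, signedPerm 1 (Function.update 1 i (-1)) = compB3 l := by
    intro i
    have hs : ∃ l, signedPerm (Equiv.swap i 2) 1 = compB3 l := by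
      by_cases hi : i = 2
      · subst hi; rwa [Equiv.swap_self]
      · exact hswap i 2 hi
    convert hcomp hs (hcomp hflip2 hs) using 3
    rw [signedPerm_comp, signedPerm_comp]
    congr 1
    · simp
    · clear hs
      revert i
      decide
  have hsign : ∀ i : Fin 3, ∃ l, signedPerm 1 (Function.update 1 i (s i)) = compB3 l := by
    intro i
    rcases Int.units_eq_one_or (s i) with h | h
    · rw [h, show Function.update (1 : Fin 3 → ℤˣ) i 1 = 1 from Function.update_eq_self i 1]
      exact hid
    · rw [h]
      exact hflip i
  convert hcomp (hcomp (hcomp (hsign 0) (hsign 1)) (hsign 2)) hperm using 3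
  simp only [signedPerm_comp]
  congr 1
  ext i
  fin_cases i <;> simp [Function.update]

lemma neg_one_pow_lenB3 (σ : Equiv.Perm (Fin 3)) (s : Fin 3 → ℤˣ) :
    (-1 : ℤ) ^ lenB3 (signedPerm σ s) = signedPermSign σ s := by
  obtain ⟨l₀, h₀⟩ := exists_compB3_eq_signedPerm σ s
  obtain ⟨l, hl, hu⟩ := Nat.sInf_mem
    (s := {m | ∃ l : List (Fin 3), l.length = m ∧ signedPerm σ s = compB3 l}) ⟨_, l₀, rfl, h₀⟩
  obtain ⟨τ, t, h, h'⟩ := exists_signedPerm_eq_compB3 l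
  have heq := signedPerm_injective (a₁ := (σ, s)) (a₂ := (τ, t)) (hu.trans h)
  rw [Prod.mk.injEq] at heq
  rw [heq.1, heq.2, ← h', lenB3, ← heq.1, ← heq.2, ← hl]
  simp

lemma partitionCoeff_eq_zero (N k : ℕ) {a b c : ℤ} (h : a < 0 ∨ a + b < 0) :
    partitionCoeff N k a b c = 0 := by
  refine sum_eq_zero fun g _ => ?_
  by_cases hg : a - |g| < 0
  · simp [symCharSum_of_neg N hg]
  · rw [symChar_of_neg N (x := b - g) (by rcases abs_cases g with h' | h' <;> omega)]
    simp

lemma e3_add_e3_add_e3 : e3 0 + e3 1 + e3 2 = ofInt 1 := by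
  ext i
  fin_cases i <;> simp [e3, ofInt]

lemma sum_posB3 : ∑ α ∈ posB3, α = ofInt ![5, 3, 1] := by
  rw [posB3_eq_image, sum_image fun i _ j _ h => intRoot_injective (ofInt_injective h)]
  ext i
  fin_cases i <;> simp [Fin.sum_univ_succ, ofInt, intRoot] <;> norm_num

lemma signedPerm_dot (n : ℕ) (σ : Equiv.Perm (Fin 3)) (s : Fin 3 → ℤˣ) :
    signedPerm σ s ((((2 * n : ℕ) : ℚ) + 1) • ω3 + ρ3) - ρ3 - ω3
      = ofInt ![s 0 * ![(n + 3 : ℤ), n + 2, n + 1] (σ 0) - 3,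
          s 1 * ![(n + 3 : ℤ), n + 2, n + 1] (σ 1) - 2,
          s 2 * ![(n + 3 : ℤ), n + 2, n + 1] (σ 2) - 1] := by
  have h : (((2 * n : ℕ) : ℚ) + 1) • ω3 + ρ3 = ofInt ![(n + 3 : ℤ), n + 2, n + 1] := by
    rw [ω3, ρ3, sum_posB3, e3_add_e3_add_e3]
    ext i
    fin_cases i <;> simp [ofInt] <;> ring
  have h' : ρ3 + ω3 = ofInt ![3, 2, 1] := by
    rw [ω3, ρ3, sum_posB3, e3_add_e3_add_e3]
    ext i
    fin_cases i <;> simp [ofInt] <;> norm_num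
  rw [sub_sub, h, h']
  ext i
  fin_cases i <;> simp [ofInt, signedPerm]

lemma sum_signs {n N : ℕ} (hN : 4 * n + 10 ≤ N) {x y z : ℤ} (hx : 0 < x) (hx' : x ≤ n + 3)
    (hy : n + 1 ≤ y) (hy' : y ≤ n + 3) :
    ∑ s : Fin 3 → ℤˣ, ((∏ i, s i : ℤˣ) : ℤ) *
        (PB3 (2 * n) (ofInt ![s 0 * x - 3, s 1 * y - 2, s 2 * z - 1]) : ℤ)
      = partitionCoeffDiff N (2 * n) x y z := by
  have hs : (univ : Finset (Fin 3 → ℤˣ)) = {![1, 1, 1], ![1, 1, -1], ![1, -1, 1], ![1, -1, -1],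
      ![-1, 1, 1], ![-1, 1, -1], ![-1, -1, 1], ![-1, -1, -1]} := by decide
  have hP : ∀ s : Fin 3 → ℤˣ, (PB3 (2 * n) (ofInt ![s 0 * x - 3, s 1 * y - 2, s 2 * z - 1]) : ℤ)
      = partitionCoeff N (2 * n) (s 0 * x - 3) (s 1 * y - 2) (s 2 * z - 1) := by
    intro s
    rcases Int.units_eq_one_or (s 0) with h0 | h0 <;> rcases Int.units_eq_one_or (s 1) with h1 | h1
    all_goals
      rw [h0, h1]
      push_cast
      exact PB3_eq_partitionCoeff (by omega) (by omega)
  simp only [hP]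
  rw [hs]
  repeat rw [sum_insert (by decide)]
  rw [sum_singleton]
  simp only [Fin.prod_univ_three, Matrix.cons_val]
  push_cast
  rw [partitionCoeff_eq_zero N _ (a := 1 * x - 3) (b := -1 * y - 2) (c := 1 * z - 1) (by omega),
    partitionCoeff_eq_zero N _ (a := 1 * x - 3) (b := -1 * y - 2) (c := -1 * z - 1) (by omega),
    partitionCoeff_eq_zero N _ (a := -1 * x - 3) (b := 1 * y - 2) (by omega),
    partitionCoeff_eq_zero N _ (a := -1 * x - 3) (b := 1 * y - 2) (by omega),
    partitionCoeff_eq_zero N _ (a := -1 * x - 3) (b := -1 * y - 2) (by omega),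
    partitionCoeff_eq_zero N _ (a := -1 * x - 3) (b := -1 * y - 2) (by omega), partitionCoeffDiff]
  ring_nf

-- For `B₃` and even `m ≥ 0`, `∑_{u ∈ W} (-1)^{ℓ(u)} P_m(u·((m+1)ω₃) - ω₃) = 1`,
-- where `u·λ = u(λ + ρ) - ρ` is the dot action.
theorem statement12 (W : Finset (V3 → V3))
    (hW : ∀ u, u ∈ W ↔ ∃ l : List (Fin 3), u = compB3 l)
    (m : ℕ) (hm : Even m) :
    ∑ u ∈ W, (-1 : ℤ) ^ lenB3 u *
      (PB3 m (u (((m : ℚ) + 1) • ω3 + ρ3) - ρ3 - ω3) : ℤ) = 1 := by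
  classical
  obtain ⟨n, rfl⟩ := hm.two_dvd
  have hW' : W = univ.image fun p : Equiv.Perm (Fin 3) × (Fin 3 → ℤˣ) => signedPerm p.1 p.2 := by
    ext u
    simp only [hW, mem_image, mem_univ, true_and, Prod.exists]
    constructor
    · rintro ⟨l, rfl⟩
      obtain ⟨σ, s, h, -⟩ := exists_signedPerm_eq_compB3 l
      exact ⟨σ, s, h.symm⟩
    · rintro ⟨σ, s, rfl⟩
      exact exists_compB3_eq_signedPerm σ s
  rw [hW', sum_image signedPerm_injective.injOn, Fintype.sum_prod_type]
  simp only [neg_one_pow_lenB3, signedPerm_dot, signedPermSign, Units.val_mul, mul_assoc,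
    ← mul_sum]
  have h : ∀ σ : Equiv.Perm (Fin 3), _ := fun σ => sum_signs (n := n) le_rfl
    (x := ![(n + 3 : ℤ), n + 2, n + 1] (σ 0)) (y := ![(n + 3 : ℤ), n + 2, n + 1] (σ 1))
    (z := ![(n + 3 : ℤ), n + 2, n + 1] (σ 2)) (by generalize σ 0 = i; fin_cases i <;> simp <;> omega)
    (by generalize σ 0 = i; fin_cases i <;> simp) (by generalize σ 1 = i; fin_cases i <;> simp)
    (by generalize σ 1 = i; fin_cases i <;> simp)
  simp only [h]
  rw [show (univ : Finset (Equiv.Perm (Fin 3))) = {1, Equiv.swap 0 1, Equiv.swap 1 2,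
    Equiv.swap 0 1 * Equiv.swap 1 2, Equiv.swap 1 2 * Equiv.swap 0 1, Equiv.swap 0 2} by decide]
  repeat rw [sum_insert (by decide)]
  rw [sum_singleton]
  have key := alternating_partitionCoeffDiff (n := n) le_rfl
  simp [Equiv.swap_apply_of_ne_of_ne]
  linarith

end
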